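/- The map U (the μ-a.e. limit of the Chacon-type maps U_n) is ergodic: every Borel set A ⊆ T² with U⁻¹(A) = A up to μ-null sets satisfies μ(A) = 0 or μ(A) = 1. -/

import Mathlib

/-!
The map `U` is of rank one. With `s = 2^{-n}`, the map `U_n` moves the cells of the dyadic grid of
side `s`, except the remainder `[1 - s, 1) × [0, s)`, cyclically by translations, and `U` agrees
with `U_n` off the top level `[1 - 2s, 1 - s) × [0, s)` and the remainder. The next map cuts this
tower into four columns and stacks them, with three quarters of the remainder as spacers. By
induction on `n`, an invariant set `A` therefore looks the same, up to null sets, in all grid cells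
other than the remainder. So a dyadic translation preserves `A` except where the remainder gets in
the way, and every point and its translate avoid the remainder for large `n`. Dyadic
translations are dense in the torus, and the action of the torus on itself is ergodic, so `A` is
null or conull.
-/

open MeasureTheory Filter Set
open scoped ENNReal symmDiff

noncomputable section

instance fact01 : Fact ((0:ℝ) < 1) := ⟨one_pos⟩

/-- The two-dimensional torus `[0,1)²` with coordinatewise addition mod 1. -/
abbrev T2 : Type := AddCircle (1:ℝ) × AddCircle (1:ℝ)

/-- The canonical representative in `[0,1)` of a point of the circle. -/
noncomputable def rep (x : AddCircle (1:ℝ)) : ℝ := ((AddCircle.equivIco 1 0) x : ℝ)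

/-- The point of the torus with coordinates `a`, `b` (mod 1). -/
noncomputable def tv (a b : ℝ) : T2 := ((a : AddCircle (1:ℝ)), (b : AddCircle (1:ℝ)))

open Classical in
/-- The Chacon-type maps `U_n` on the torus. -/
noncomputable def chaconU : ℕ → T2 → T2
  | 0 => id
  | 1 => fun x =>
      if 0 ≤ rep x.1 ∧ rep x.1 < 1/2 ∧ 1/2 ≤ rep x.2 ∧ rep x.2 < 1 then x + tv (1/2) 0
      else if 1/2 ≤ rep x.1 ∧ rep x.1 < 1 ∧ 1/2 ≤ rep x.2 ∧ rep x.2 < 1 then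
        x + tv (-(1/2)) (-(1/2))
      else if 0 ≤ rep x.1 ∧ rep x.1 < 1/2 ∧ 0 ≤ rep x.2 ∧ rep x.2 < 1/2 then x + tv 0 (1/2)
      else x
  | (n+2) => fun x =>
      let s : ℝ := 1 / 2 ^ (n+2)
      let a := rep x.1
      let b := rep x.2
      if 1-4*s ≤ a ∧ a < 1-3*s ∧ s ≤ b ∧ b < 2*s then x + tv (5*s-1) (1-2*s)
      else if 1-3*s ≤ a ∧ a < 1-2*s ∧ s ≤ b ∧ b < 2*s then x + tv s 0
      else if 1-4*s ≤ a ∧ a < 1-3*s ∧ 0 ≤ b ∧ b < s then x + tv (3*s) s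
      else if 1-3*s ≤ a ∧ a < 1-2*s ∧ 0 ≤ b ∧ b < s then x + tv s 0
      else if 1-2*s ≤ a ∧ a < 1 ∧ s ≤ b ∧ b < 2*s then x + tv (2*s-1) (1-3*s)
      else if 1-2*s ≤ a ∧ a < 1-s ∧ 0 ≤ b ∧ b < s then x + tv (2*s-1) (1-s)
      else if 1-s ≤ a ∧ a < 1 ∧ 0 ≤ b ∧ b < s then x
      else chaconU (n+1) x

/-- An automorphism of the torus: measurable, bijective up to null sets with measurable
inverse, and measure-preserving. -/
def IsAutomorphism (U : T2 → T2) : Prop :=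
  Measurable U ∧ ∃ V : T2 → T2, Measurable V ∧
    (∀ᵐ x ∂(volume : Measure T2), V (U x) = x) ∧
    (∀ᵐ x ∂(volume : Measure T2), U (V x) = x) ∧
    ∀ A : Set T2, MeasurableSet A → volume (U ⁻¹' A) = volume A

lemma measure_eq_zero_or_one_of_dense_preimage_add_ae {G : Type*} [AddGroup G]
    [TopologicalSpace G] [IsTopologicalAddGroup G] [MeasurableSpace G] [BorelSpace G]
    [MeasurableAdd₂ G] {μ : Measure G} [IsProbabilityMeasure μ] [μ.InnerRegular]
    [μ.IsAddLeftInvariant] {A : Set G} (hA : NullMeasurableSet A μ)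
    (hd : Dense {g : G | (g + ·) ⁻¹' A =ᵐ[μ] A}) : μ A = 0 ∨ μ A = 1 := by
  rcases eventuallyConst_set'.1 (aeconst_of_dense_setOfPred_preimage_vadd_ae hA hd) with h | h
  · exact .inl (by rw [measure_congr h, measure_empty])
  · exact .inr (by rw [measure_congr h, measure_univ])

section TranslatesAgree

variable {G : Type*} [AddGroup G] [MeasurableSpace G]

/-- The set `A` looks the same in the translates `w + Q` and `w' + Q` of the window `Q`, up to a
`μ`-null set. -/
def TranslatesAgree (μ : Measure G) (A Q : Set G) (w w' : G) : Prop :=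
  ∀ᵐ y ∂μ, y ∈ Q → (w + y ∈ A ↔ w' + y ∈ A)

namespace TranslatesAgree

variable {μ : Measure G} {A Q : Set G} {w w' w'' : G}

protected lemma refl (μ : Measure G) (A Q : Set G) (w : G) : TranslatesAgree μ A Q w w :=
  ae_of_all _ fun _ _ ↦ Iff.rfl

protected lemma symm (h : TranslatesAgree μ A Q w w') : TranslatesAgree μ A Q w' w :=
  h.mono fun _ hy hQ ↦ (hy hQ).symm

protected lemma trans (h : TranslatesAgree μ A Q w w') (h' : TranslatesAgree μ A Q w' w'') :
    TranslatesAgree μ A Q w w'' := by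
  filter_upwards [h, h'] with y hy hy' hQ using (hy hQ).trans (hy' hQ)

variable [MeasurableAdd G] [μ.IsAddLeftInvariant]

lemma add_right (h : TranslatesAgree μ A Q w w') {Q' : Set G} {c : G}
    (hQ : ∀ y ∈ Q', c + y ∈ Q) : TranslatesAgree μ A Q' (w + c) (w' + c) := by
  filter_upwards [(eventually_add_left_iff μ c).2 h] with y hy hyQ
  simpa only [add_assoc] using hy (hQ y hyQ)

lemma of_map_eq {f : G → G} (hA : ∀ᵐ x ∂μ, x ∈ (w + ·) '' Q → (f x ∈ A ↔ x ∈ A))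
    (hf : ∀ y ∈ Q, f (w + y) = w' + y) : TranslatesAgree μ A Q w w' := by
  filter_upwards [(eventually_add_left_iff μ w).2 hA] with y hy hyQ
  rw [← hy (mem_image_of_mem _ hyQ), hf y hyQ]

lemma ae_add_mem_iff {v : G} (h : TranslatesAgree μ A Q w (v + w)) :
    ∀ᵐ x ∂μ, -w + x ∈ Q → (v + x ∈ A ↔ x ∈ A) := by
  filter_upwards [(eventually_add_left_iff μ (-w)).2 h] with x hx hxQ
  simpa only [add_assoc, add_neg_cancel_left] using (hx hxQ).symm

end TranslatesAgree

end TranslatesAgree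

/-! ### Coordinates on the torus -/

lemma rep_nonneg (x : AddCircle (1 : ℝ)) : 0 ≤ rep x :=
  (AddCircle.equivIco 1 0 x).2.1

lemma rep_lt_one (x : AddCircle (1 : ℝ)) : rep x < 1 :=
  (AddCircle.equivIco 1 0 x).2.2.trans_eq (zero_add 1)

lemma coe_rep (x : AddCircle (1 : ℝ)) : (rep x : AddCircle (1 : ℝ)) = x :=
  AddCircle.coe_equivIco

lemma rep_coe {a : ℝ} (h0 : 0 ≤ a) (h1 : a < 1) : rep a = a :=
  AddCircle.equivIco_coe_of_mem ⟨h0, by rwa [zero_add]⟩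

lemma rep_coe_add {a : ℝ} {y : AddCircle (1 : ℝ)} (h0 : 0 ≤ a) (h1 : a + rep y < 1) :
    rep (a + y) = a + rep y := by
  rw [← rep_coe (add_nonneg h0 (rep_nonneg y)) h1, AddCircle.coe_add, coe_rep]

lemma coe_add_intCast (a : ℝ) (i : ℤ) : ((a + i : ℝ) : AddCircle (1 : ℝ)) = a := by
  rw [AddCircle.coe_add, (AddCircle.coe_eq_zero_iff (1 : ℝ) (x := i)).2 ⟨i, zsmul_one i⟩, add_zero]

lemma tv_add_tv (a b c d : ℝ) : tv a b + tv c d = tv (a + c) (b + d) :=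
  rfl

lemma tv_add_intCast (a b : ℝ) (i j : ℤ) : tv (a + i) (b + j) = tv a b := by
  rw [tv, coe_add_intCast, coe_add_intCast, tv]

instance : (volume : Measure T2).IsAddLeftInvariant :=
  Measure.prod.instIsAddLeftInvariant

instance : IsProbabilityMeasure (volume : Measure T2) :=
  have : IsProbabilityMeasure (volume : Measure (AddCircle (1 : ℝ))) :=
    ⟨by rw [AddCircle.measure_univ, ENNReal.ofReal_one]⟩
  inferInstanceAs (IsProbabilityMeasure (volume.prod volume))

lemma dense_dyadic :
    Dense {v : T2 | ∃ m k l : ℕ, v = tv (k / 2 ^ m) (l / 2 ^ m)} := by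
  have tendsto_floor (x : AddCircle (1 : ℝ)) :
      Tendsto (fun m : ℕ ↦ (((⌊rep x * 2 ^ m⌋₊ : ℝ) / 2 ^ m : ℝ) : AddCircle (1 : ℝ))) atTop
        (nhds x) := by
    have h : Tendsto (fun m : ℕ ↦ (⌊rep x * 2 ^ m⌋₊ : ℝ) / 2 ^ m) atTop (nhds (rep x)) :=
      (tendsto_nat_floor_mul_div_atTop (rep_nonneg x)).comp
        (tendsto_pow_atTop_atTop_of_one_lt one_lt_two)
    have hmk : Continuous (fun a : ℝ ↦ (a : AddCircle (1 : ℝ))) := AddCircle.continuous_mk' 1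
    have := (hmk.tendsto (rep x)).comp h
    rwa [coe_rep] at this
  exact fun x ↦ mem_closure_of_tendsto ((tendsto_floor x.1).prodMk_nhds (tendsto_floor x.2))
    (Eventually.of_forall fun m ↦ ⟨m, _, _, rfl⟩)

/-- The corner square `[0, s) × [0, s)` of the torus; its translates by `tv (i * s) (j * s)` are
the cells of the grid of side `s`. -/
def cornerSquare (s : ℝ) : Set T2 := {y | rep y.1 < s ∧ rep y.2 < s}

lemma rep_tv_add {s a b : ℝ} {y : T2} (hy : y ∈ cornerSquare s) (ha : 0 ≤ a) (has : a + s ≤ 1)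
    (hb : 0 ≤ b) (hbs : b + s ≤ 1) :
    rep (tv a b + y).1 = a + rep y.1 ∧ rep (tv a b + y).2 = b + rep y.2 :=
  ⟨rep_coe_add ha (by linarith [hy.1]), rep_coe_add hb (by linarith [hy.2])⟩

lemma tv_add_mem_cornerSquare {s c d : ℝ} (hs : 2 * s ≤ 1) (hc : 0 ≤ c) (hcs : c ≤ s)
    (hd : 0 ≤ d) (hds : d ≤ s) {y : T2} (hy : y ∈ cornerSquare s) :
    tv c d + y ∈ cornerSquare (2 * s) := by
  obtain ⟨h1, h2⟩ := rep_tv_add hy hc (by linarith) hd (by linarith)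
  exact ⟨by linarith [hy.1], by linarith [hy.2]⟩

lemma exists_int_rep_neg_add_lt {s : ℝ} (hs : 0 < s) (hs1 : s ≤ 1) (x : AddCircle (1 : ℝ)) :
    ∃ i : ℤ, rep (-((i * s : ℝ) : AddCircle (1 : ℝ)) + x) < s := by
  have hle : 0 ≤ rep x - ⌊rep x / s⌋ * s := Int.sub_floor_div_mul_nonneg _ hs
  have hlt : rep x - ⌊rep x / s⌋ * s < s := Int.sub_floor_div_mul_lt _ hs
  refine ⟨⌊rep x / s⌋, ?_⟩
  rwa [neg_add_eq_sub, ← coe_rep x, ← AddCircle.coe_sub, coe_rep, rep_coe hle (hlt.trans_le hs1)]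

lemma exists_neg_add_mem_cornerSquare {s : ℝ} (hs : 0 < s) (hs1 : s ≤ 1) (x : T2) :
    ∃ i j : ℤ, -tv (i * s) (j * s) + x ∈ cornerSquare s := by
  obtain ⟨i, hi⟩ := exists_int_rep_neg_add_lt hs hs1 x.1
  obtain ⟨j, hj⟩ := exists_int_rep_neg_add_lt hs hs1 x.2
  exact ⟨i, j, hi, hj⟩

/-! ### Stabilization of the maps `U_n` -/

lemma four_mul_one_div_two_pow_le {n m : ℕ} (h : n ≤ m) :
    (4 : ℝ) * (1 / 2 ^ (m + 2)) ≤ 2 * (1 / 2 ^ (n + 1)) :=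
  calc (4 : ℝ) * (1 / 2 ^ (m + 2)) = 1 / 2 ^ m := by rw [pow_add]; field_simp; norm_num
    _ ≤ 1 / 2 ^ n := one_div_pow_le_one_div_pow_of_le one_le_two h
    _ = 2 * (1 / 2 ^ (n + 1)) := by rw [pow_succ]; field_simp

/-- The region excluded here, `[1 - 2s, 1) × [0, s)` with `s = 2^{-(n+1)}`, is the union of the top
level and the remainder of the tower of `U_{n+1}`. -/
lemma chaconU_eq_of_le {n m : ℕ} (h : n ≤ m) {x : T2}
    (hx : rep x.1 < 1 - 2 * (1 / 2 ^ (n + 1)) ∨ 1 / 2 ^ (n + 1) ≤ rep x.2) :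
    chaconU (m + 1) x = chaconU (n + 1) x := by
  induction m, h using Nat.le_induction with
  | base => rfl
  | succ m hnm ih =>
    have hs := four_mul_one_div_two_pow_le hnm
    have hp : (0 : ℝ) < 1 / 2 ^ (m + 2) := by positivity
    rw [← ih, chaconU]
    dsimp only
    iterate 7 rw [if_neg (by rintro ⟨_, _, _, _⟩; rcases hx with hx | hx <;> linarith)]

/-- `A` is invariant under each map `U_{n+1}` on the region where the later maps agree with it. -/
def ChaconInvariant (A : Set T2) : Prop :=
  ∀ᵐ x ∂(volume : Measure T2), ∀ n : ℕ,
    rep x.1 < 1 - 2 * (1 / 2 ^ (n + 1)) ∨ 1 / 2 ^ (n + 1) ≤ rep x.2 →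
      (chaconU (n + 1) x ∈ A ↔ x ∈ A)

lemma chaconInvariant_of_preimage_ae_eq {U : T2 → T2}
    (hlim : ∀ᵐ x ∂(volume : Measure T2), ∃ N : ℕ, ∀ n, N ≤ n → chaconU n x = U x)
    {A : Set T2} (hA : U ⁻¹' A =ᵐ[volume] A) : ChaconInvariant A := by
  filter_upwards [hlim, hA.mem_iff] with x ⟨N, hN⟩ hxA n hx
  rw [← chaconU_eq_of_le (Nat.le_add_right n N) hx, hN _ (by lia)]
  exact hxA

lemma ChaconInvariant.translatesAgree_of_chaconU_eq {A : Set T2} (hA : ChaconInvariant A) {n : ℕ}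
    {s : ℝ} (hs : s = 1 / 2 ^ (n + 1)) {a b a' b' : ℝ}
    (hcell : 0 ≤ a ∧ a + s ≤ 1 ∧ 0 ≤ b ∧ b + s ≤ 1) (hab : a + s ≤ 1 - 2 * s ∨ s ≤ b)
    (hU : ∀ x, rep x.1 ∈ Ico a (a + s) → rep x.2 ∈ Ico b (b + s) →
      chaconU (n + 1) x = x + tv (a' - a) (b' - b)) :
    TranslatesAgree volume A (cornerSquare s) (tv a b) (tv a' b') := by
  obtain ⟨ha, has, hb, hbs⟩ := hcell
  have hrep (y) (hy : y ∈ cornerSquare s) := rep_tv_add hy ha has hb hbs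
  refine .of_map_eq (f := chaconU (n + 1)) (hA.mono ?_) fun y hy ↦ ?_
  · rintro _ hx ⟨y, hy, rfl⟩
    refine hx n ?_
    rw [(hrep y hy).1, (hrep y hy).2, ← hs]
    exact hab.imp (fun h ↦ by linarith [hy.1]) (fun h ↦ by linarith [rep_nonneg y.2])
  · rw [hU, add_right_comm, tv_add_tv, add_sub_cancel, add_sub_cancel]
    · rw [(hrep y hy).1]
      exact ⟨by linarith [rep_nonneg y.1], by linarith [hy.1]⟩
    · rw [(hrep y hy).2]
      exact ⟨by linarith [rep_nonneg y.2], by linarith [hy.2]⟩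

/-! ### The tower of `U_n` -/

/-- The table of the map `U_{n+2}` on the top level `[1 - 4s, 1 - 2s) × [0, 2s)` and the remainder
`[1 - 2s, 1) × [0, 2s)` of the tower of `U_{n+1}`, where `s = 2^{-(n+2)}`: the cell at `w` is
translated to the cell at `w'`. -/
inductive GluingMove (s : ℝ) : T2 → T2 → Prop
  | topUpperLeft : GluingMove s (tv (1 - 4 * s) s) (tv s (1 - s))
  | topUpperRight : GluingMove s (tv (1 - 3 * s) s) (tv (1 - 2 * s) s)
  | topLowerLeft : GluingMove s (tv (1 - 4 * s) 0) (tv (1 - s) s)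
  | topLowerRight : GluingMove s (tv (1 - 3 * s) 0) (tv (1 - 2 * s) 0)
  | remainderUpperLeft : GluingMove s (tv (1 - 2 * s) s) (tv 0 (1 - 2 * s))
  | remainderUpperRight : GluingMove s (tv (1 - s) s) (tv s (1 - 2 * s))

lemma pos_and_four_mul_le_one {n : ℕ} {s : ℝ} (hs : s = 1 / 2 ^ (n + 2)) : 0 < s ∧ 4 * s ≤ 1 := by
  have := four_mul_one_div_two_pow_le n.zero_le
  rw [← hs, zero_add, pow_one, mul_one_div_cancel two_ne_zero] at this
  exact ⟨by rw [hs]; positivity, this⟩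

lemma GluingMove.translatesAgree {n : ℕ} {s : ℝ} (hs : s = 1 / 2 ^ (n + 2)) {A : Set T2}
    (hA : ChaconInvariant A) {w w' : T2} (h : GluingMove s w w') :
    TranslatesAgree volume A (cornerSquare s) w w' := by
  obtain ⟨hp, h4⟩ := pos_and_four_mul_le_one hs
  cases h
  all_goals
    refine hA.translatesAgree_of_chaconU_eq hs (by grind) (by grind) fun x ⟨_, _⟩ ⟨_, _⟩ ↦ ?_
    simp only [chaconU, ← hs]
    split_ifs
    all_goals grind

/-- All cells of the grid of side `s` other than the remainder `[1 - s, 1) × [0, s)` meet `A` in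
the same way as the base `[0, s) × [1 - s, 1)` of the tower. -/
def TowerHomogeneous (A : Set T2) (s : ℝ) : Prop :=
  ∀ i j : ℤ, tv (i * s) (j * s) ≠ tv (1 - s) 0 →
    TranslatesAgree volume A (cornerSquare s) (tv (i * s) (j * s)) (tv 0 (1 - s))

lemma exists_intCast_mul_eq_mul_two_mul_add (i : ℤ) (s : ℝ) :
    ∃ k : ℤ, ∃ c : ℝ, (c = 0 ∨ c = s) ∧ i * s = k * (2 * s) + c := by
  obtain ⟨k, rfl | rfl⟩ := i.even_or_odd'
  · exact ⟨k, 0, .inl rfl, by push_cast; ring⟩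
  · exact ⟨k, s, .inr rfl, by push_cast; ring⟩

lemma ChaconInvariant.towerHomogeneous_one_half {A : Set T2} (hA : ChaconInvariant A) :
    TowerHomogeneous A (1 / 2) := by
  have hs : (1 / 2 : ℝ) = 1 / 2 ^ (0 + 1) := by norm_num
  have base_move :
      TranslatesAgree volume A (cornerSquare (1 / 2)) (tv 0 (1 / 2)) (tv (1 / 2) (1 / 2)) := by
    refine hA.translatesAgree_of_chaconU_eq hs (by norm_num) (by norm_num) fun x ⟨_, _⟩ ⟨_, _⟩ ↦ ?_
    simp only [chaconU]
    split_ifs <;> grind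
  have middle_move :
      TranslatesAgree volume A (cornerSquare (1 / 2)) (tv (1 / 2) (1 / 2)) (tv 0 0) := by
    refine hA.translatesAgree_of_chaconU_eq hs (by norm_num) (by norm_num) fun x ⟨_, _⟩ ⟨_, _⟩ ↦ ?_
    simp only [chaconU]
    split_ifs <;> grind
  intro i j
  obtain ⟨k, c, hc, hi⟩ := exists_intCast_mul_eq_mul_two_mul_add i (1 / 2)
  obtain ⟨l, d, hd, hj⟩ := exists_intCast_mul_eq_mul_two_mul_add j (1 / 2)
  have hcd : tv (i * (1 / 2)) (j * (1 / 2)) = tv c d := by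
    rw [hi, hj, mul_one_div_cancel two_ne_zero, mul_one, mul_one, add_comm (k : ℝ),
      add_comm (l : ℝ), tv_add_intCast]
  rw [hcd, show (1 - 1 / 2 : ℝ) = 1 / 2 by norm_num]
  rcases hc with rfl | rfl <;> rcases hd with rfl | rfl <;> intro hne
  · exact (base_move.trans middle_move).symm
  · exact .refl ..
  · exact absurd rfl hne
  · exact base_move.symm

lemma tv_top_ne_remainder {s : ℝ} (hp : 0 < s) (hs : 4 * s ≤ 1) :
    tv (1 - 4 * s) 0 ≠ tv (1 - 2 * s) 0 := by
  intro h
  have := congrArg (fun w : T2 ↦ rep w.1) h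
  simp only [tv] at this
  rw [rep_coe (by linarith) (by linarith), rep_coe (by linarith) (by linarith)] at this
  linarith

lemma TowerHomogeneous.quarter {A : Set T2} {s : ℝ} (hA : TowerHomogeneous A (2 * s))
    (hs : 0 < s) (hs1 : 2 * s ≤ 1) {i j : ℤ}
    (hij : tv (i * (2 * s)) (j * (2 * s)) ≠ tv (1 - 2 * s) 0) {c d : ℝ} (hc : c = 0 ∨ c = s)
    (hd : d = 0 ∨ d = s) :
    TranslatesAgree volume A (cornerSquare s) (tv (i * (2 * s) + c) (j * (2 * s) + d))
      (tv c (1 - 2 * s + d)) := by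
  rw [← tv_add_tv, ← zero_add c, ← tv_add_tv, zero_add]
  refine (hA i j hij).add_right fun y hy ↦ tv_add_mem_cornerSquare hs1 ?_ ?_ ?_ ?_ hy <;> grind

lemma TowerHomogeneous.top_quarter {A : Set T2} {n : ℕ} {s : ℝ} (hs : s = 1 / 2 ^ (n + 2))
    (hA : TowerHomogeneous A (2 * s)) {c d : ℝ} (hc : c = 0 ∨ c = s) (hd : d = 0 ∨ d = s) :
    TranslatesAgree volume A (cornerSquare s) (tv (1 - 4 * s + c) d) (tv c (1 - 2 * s + d)) := by
  obtain ⟨hp, h4⟩ := pos_and_four_mul_le_one hs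
  have hi : (2 ^ (n + 1) - 2 : ℤ) * (2 * s) = 1 - 4 * s := by
    rw [hs, pow_succ _ (n + 1)]
    push_cast
    field_simp
    ring
  have hj : (0 : ℤ) * (2 * s) = 0 := by rw [Int.cast_zero, zero_mul]
  have := hA.quarter hp (by linarith) (i := 2 ^ (n + 1) - 2) (j := 0)
    (by rw [hi, hj]; exact tv_top_ne_remainder hp h4) hc hd
  rwa [hi, hj, zero_add] at this

/-- The tower at side `2 * s` is cut into four columns, which are stacked in the order upper left,
upper right, lower left, lower right, with a quarter of the remainder as a spacer on top of the
second, third and fourth. -/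
lemma TowerHomogeneous.columns_and_spacers {A : Set T2} (hinv : ChaconInvariant A) {n : ℕ} {s : ℝ}
    (hs : s = 1 / 2 ^ (n + 2)) (hA : TowerHomogeneous A (2 * s)) {c d : ℝ} (hc : c = 0 ∨ c = s)
    (hd : d = 0 ∨ d = s) :
    TranslatesAgree volume A (cornerSquare s) (tv c (1 - 2 * s + d)) (tv 0 (1 - s)) ∧
      (tv (1 - 2 * s + c) d ≠ tv (1 - s) 0 →
        TranslatesAgree volume A (cornerSquare s) (tv (1 - 2 * s + c) d) (tv 0 (1 - s))) := by
  have upperLeft := hA.top_quarter hs (.inl rfl) (.inr rfl)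
  have upperRight := hA.top_quarter hs (.inr rfl) (.inr rfl)
  have lowerLeft := hA.top_quarter hs (.inl rfl) (.inl rfl)
  have lowerRight := hA.top_quarter hs (.inr rfl) (.inl rfl)
  rw [show 1 - 4 * s + 0 = 1 - 4 * s by ring, show 1 - 2 * s + s = 1 - s by ring]
    at upperLeft
  rw [show 1 - 4 * s + s = 1 - 3 * s by ring, show 1 - 2 * s + s = 1 - s by ring]
    at upperRight
  rw [add_zero, add_zero] at lowerLeft
  rw [show 1 - 4 * s + s = 1 - 3 * s by ring, add_zero] at lowerRight
  have column₂ := (GluingMove.topUpperLeft.translatesAgree hs hinv).symm.trans upperLeft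
  have spacer₂ := (GluingMove.topUpperRight.translatesAgree hs hinv).symm.trans
    (upperRight.trans column₂)
  have column₃ := (GluingMove.remainderUpperLeft.translatesAgree hs hinv).symm.trans spacer₂
  have spacer₃ := (GluingMove.topLowerLeft.translatesAgree hs hinv).symm.trans
    (lowerLeft.trans column₃)
  have column₄ := (GluingMove.remainderUpperRight.translatesAgree hs hinv).symm.trans spacer₃
  have spacer₄ := (GluingMove.topLowerRight.translatesAgree hs hinv).symm.trans
    (lowerRight.trans column₄)
  have hsub : 1 - 2 * s + s = 1 - s := by ring
  rcases hc with rfl | rfl <;> rcases hd with rfl | rfl <;> simp only [add_zero, hsub]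
  · exact ⟨column₃, fun _ ↦ spacer₄⟩
  · exact ⟨.refl .., fun _ ↦ spacer₂⟩
  · exact ⟨column₄, fun h ↦ absurd rfl h⟩
  · exact ⟨column₂, fun _ ↦ spacer₃⟩

lemma TowerHomogeneous.half {A : Set T2} (hinv : ChaconInvariant A) {n : ℕ} {s : ℝ}
    (hs : s = 1 / 2 ^ (n + 2)) (hA : TowerHomogeneous A (2 * s)) : TowerHomogeneous A s := by
  obtain ⟨hp, h4⟩ := pos_and_four_mul_le_one hs
  intro i j hij
  obtain ⟨k, c, hc, hi⟩ := exists_intCast_mul_eq_mul_two_mul_add i s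
  obtain ⟨l, d, hd, hj⟩ := exists_intCast_mul_eq_mul_two_mul_add j s
  obtain ⟨hcolumn, hspacer⟩ := hA.columns_and_spacers hinv hs hc hd
  by_cases hkl : tv (k * (2 * s)) (l * (2 * s)) = tv (1 - 2 * s) 0
  · have hcell : tv (i * s) (j * s) = tv (1 - 2 * s + c) d := by
      rw [hi, hj, ← tv_add_tv, hkl, tv_add_tv, zero_add]
    rw [hcell] at hij ⊢
    exact hspacer hij
  · rw [hi, hj]
    exact (hA.quarter hp (by linarith) hkl hc hd).trans hcolumn

lemma ChaconInvariant.towerHomogeneous {A : Set T2} (hA : ChaconInvariant A) (n : ℕ) :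
    TowerHomogeneous A (1 / 2 ^ (n + 1)) := by
  induction n with
  | zero => simpa only [zero_add, pow_one] using hA.towerHomogeneous_one_half
  | succ n ih =>
    refine .half hA rfl ?_
    rwa [show 2 * (1 / 2 ^ (n + 2)) = (1 / 2 ^ (n + 1) : ℝ) by rw [pow_succ _ (n + 1)]; field_simp]

/-! ### Invariance under dyadic translations -/

lemma ne_remainder_of_rep_lt {s : ℝ} (hs1 : s ≤ 1) {x w : T2}
    (hx : -w + x ∈ cornerSquare s) (hxs : rep x.1 < 1 - s) : w ≠ tv (1 - s) 0 := by
  rintro rfl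
  have h := rep_tv_add hx (a := 1 - s) (b := 0) (by linarith) (by linarith) le_rfl (by linarith)
  rw [add_neg_cancel_left] at h
  linarith [h.1, rep_nonneg (-tv (1 - s) 0 + x).1]

lemma TowerHomogeneous.ae_add_mem_iff {A : Set T2} {s : ℝ} (hA : TowerHomogeneous A s)
    (hs : 0 < s) (hs1 : s ≤ 1) (K L : ℤ) :
    ∀ᵐ x ∂(volume : Measure T2), rep x.1 < 1 - s → rep (tv (K * s) (L * s) + x).1 < 1 - s →
      (tv (K * s) (L * s) + x ∈ A ↔ x ∈ A) := by
  set v := tv (K * s) (L * s) with hv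
  have hcell : ∀ i j : ℤ, tv (i * s) (j * s) ≠ tv (1 - s) 0 →
      v + tv (i * s) (j * s) ≠ tv (1 - s) 0 →
      ∀ᵐ x, -tv (i * s) (j * s) + x ∈ cornerSquare s → (v + x ∈ A ↔ x ∈ A) := by
    intro i j hij hvij
    have hadd : v + tv (i * s) (j * s) = tv ((K + i : ℤ) * s) ((L + j : ℤ) * s) := by
      rw [hv, tv_add_tv]
      push_cast
      rw [add_mul, add_mul]
    refine ((hA i j hij).trans ?_).ae_add_mem_iff
    rw [hadd] at hvij ⊢
    exact (hA _ _ hvij).symm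
  simp only [← eventually_imp_distrib_left, ← ae_all_iff] at hcell
  filter_upwards [hcell] with x hx hxs hvxs
  obtain ⟨i, j, hij⟩ := exists_neg_add_mem_cornerSquare hs hs1 x
  refine hx i j (ne_remainder_of_rep_lt hs1 hij hxs) (ne_remainder_of_rep_lt hs1 ?_ hvxs) hij
  rwa [neg_add_rev, add_assoc, neg_add_cancel_left]

lemma ChaconInvariant.preimage_dyadic_add_ae_eq {A : Set T2} (hA : ChaconInvariant A)
    (m k l : ℕ) : (tv (k / 2 ^ m) (l / 2 ^ m) + ·) ⁻¹' A =ᵐ[volume] A := by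
  have hlevel (n : ℕ) := (hA.towerHomogeneous (n + m)).ae_add_mem_iff (by positivity)
    (div_le_one_of_le₀ (one_le_pow₀ one_le_two) (by positivity)) (k * 2 ^ (n + 1)) (l * 2 ^ (n + 1))
  have hdyadic (k n : ℕ) : (k * 2 ^ (n + 1) : ℤ) * (1 / 2 ^ (n + m + 1)) = (k / 2 ^ m : ℝ) := by
    rw [add_right_comm, pow_add 2 (n + 1) m]
    push_cast
    field_simp
  refine eventuallyEq_set.2 ?_
  filter_upwards [ae_all_iff.2 hlevel] with x hx
  simp only [hdyadic] at hx
  set v := tv (k / 2 ^ m) (l / 2 ^ m)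
  have hsmall : Tendsto (fun n : ℕ ↦ 1 - (1 : ℝ) / 2 ^ (n + m + 1)) atTop (nhds 1) := by
    have hpow : Tendsto (fun n : ℕ ↦ (2 : ℝ) ^ (n + m + 1)) atTop atTop :=
      (tendsto_pow_atTop_atTop_of_one_lt one_lt_two).comp (tendsto_add_atTop_nat (m + 1))
    simpa only [sub_zero] using tendsto_const_nhds.sub (hpow.const_div_atTop 1)
  obtain ⟨n, hxn, hvxn⟩ := ((hsmall.eventually_const_lt (rep_lt_one x.1)).and
    (hsmall.eventually_const_lt (rep_lt_one (v + x).1))).exists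
  exact hx n hxn hvxn

theorem chacon_ergodic_general {U : T2 → T2}
    (hlim : ∀ᵐ x ∂(volume : Measure T2), ∃ N : ℕ, ∀ n, N ≤ n → chaconU n x = U x)
    {A : Set T2} (hA : NullMeasurableSet A volume) (hinv : U ⁻¹' A =ᵐ[volume] A) :
    volume A = 0 ∨ volume A = 1 := by
  have hchacon := chaconInvariant_of_preimage_ae_eq hlim hinv
  refine measure_eq_zero_or_one_of_dense_preimage_add_ae hA (dense_dyadic.mono ?_)
  rintro _ ⟨m, k, l, rfl⟩
  exact hchacon.preimage_dyadic_add_ae_eq m k l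

/-- The a.e. limit `U` of the Chacon-type maps is ergodic: every Borel set `A` with
`U⁻¹(A) = A` up to null sets has measure `0` or `1`. -/
theorem chacon_ergodic (U : T2 → T2)
    (hU : IsAutomorphism U)
    (hlim : ∀ᵐ x ∂(volume : Measure T2), ∃ N : ℕ, ∀ n, N ≤ n → chaconU n x = U x) :
    ∀ A : Set T2, MeasurableSet A → volume ((U ⁻¹' A) ∆ A) = 0 →
      volume A = 0 ∨ volume A = 1 :=
  fun _ hA hinv ↦
    chacon_ergodic_general hlim hA.nullMeasurableSet (measure_symmDiff_eq_zero_iff.1 hinv)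

end
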